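/- arXiv:1404.7178 — 2 statements merged into one kernel-verified Lean document; each statement's English description precedes it below -/
import Mathlib

section
/- For the random field Ising model on V_n with i.i.d. standard Gaussian disorder, let F_n = F_n(β,h) = log Z_n(β,h). Then Σ_{x,y ∈ V_n} (E(∂⁴F_n / ∂g_x² ∂g_y²))² ≤ 24 h² |V_n|, where for x ≠ y the mixed fourth derivative is ∂⁴F_n/∂g_x²∂g_y² and for x = y it is ∂⁴F_n/∂g_x⁴, and E denotes expectation over the disorder. -/
open Finset MeasureTheory ProbabilityTheory Real Filter

noncomputable section

/-- The box `V_n = ℤ^d ∩ [1,n]^d`. -/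
def box (d n : ℕ) : Finset (Fin d → ℤ) := Fintype.piFinset fun _ => Finset.Icc 1 (n : ℤ)

/-- Spin configurations on `V_n`, a spin is encoded by a `Bool`. -/
abbrev Config (d n : ℕ) := {x // x ∈ box d n} → Bool

/-- The spin value `±1` of a `Bool`. -/
def spin (b : Bool) : ℝ := if b then 1 else -1

/-- The (negative) Hamiltonian `β ∑_{⟨xy⟩} σ_x σ_y + h ∑_x g_x σ_x`, where
`⟨xy⟩` ranges over nearest-neighbor pairs in the box (each ordered pair counted
with weight 1/2, i.e. each unordered pair once). -/
def energy (d n : ℕ) (β h : ℝ) (g : {x // x ∈ box d n} → ℝ) (σ : Config d n) : ℝ :=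
  β * ((1 : ℝ) / 2 * ∑ x : {x // x ∈ box d n}, ∑ y : {x // x ∈ box d n},
      if (∑ i, |x.1 i - y.1 i|) = 1 then spin (σ x) * spin (σ y) else 0)
  + h * ∑ x, g x * spin (σ x)

/-- The partition function `Z_n(β,h)`. -/
def Z (d n : ℕ) (β h : ℝ) (g : {x // x ∈ box d n} → ℝ) : ℝ :=
  ∑ σ : Config d n, Real.exp (energy d n β h g σ)

/-- Gibbs expectation `⟨f⟩`. -/
def gibbs (d n : ℕ) (β h : ℝ) (g : {x // x ∈ box d n} → ℝ) (f : Config d n → ℝ) : ℝ :=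
  (∑ σ : Config d n, f σ * Real.exp (energy d n β h g σ)) / Z d n β h g

/-- Two-replica Gibbs expectation. -/
def gibbs2 (d n : ℕ) (β h : ℝ) (g : {x // x ∈ box d n} → ℝ)
    (f : Config d n → Config d n → ℝ) : ℝ :=
  (∑ σ1 : Config d n, ∑ σ2 : Config d n,
    f σ1 σ2 * (Real.exp (energy d n β h g σ1) * Real.exp (energy d n β h g σ2)))
    / (Z d n β h g) ^ 2

/-- The overlap `R_{1,2}` of two configurations. -/
def overlap (d n : ℕ) (σ1 σ2 : Config d n) : ℝ :=
  ((box d n).card : ℝ)⁻¹ * ∑ x, spin (σ1 x) * spin (σ2 x)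

/-- The disorder: i.i.d. standard Gaussians indexed by the box. -/
def μdis (d n : ℕ) : Measure ({x // x ∈ box d n} → ℝ) :=
  Measure.pi fun _ => gaussianReal 0 1

/-- Partial derivative in the coordinate `x`. -/
def pd {ι : Type*} [DecidableEq ι] (x : ι) (F : (ι → ℝ) → ℝ) : (ι → ℝ) → ℝ :=
  fun g => deriv (fun t => F (Function.update g x t)) (g x)

end

abbrev Site (d n : ℕ) := {x // x ∈ box d n}

theorem hasDerivAt_coord {d n : ℕ} (x z : Site d n) (g : Site d n → ℝ) (t : ℝ) :
    HasDerivAt (fun s => Function.update g x s z) (if z = x then 1 else 0) t := by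
  by_cases hz : z = x
  · subst hz
    simpa using hasDerivAt_id' t
  · simpa [Function.update_of_ne hz, hz] using hasDerivAt_const t (g z)

theorem hasDerivAt_energy {d n : ℕ} (β h : ℝ) (x : Site d n) (g : Site d n → ℝ)
    (σ : Config d n) (t : ℝ) :
    HasDerivAt (fun s => energy d n β h (Function.update g x s) σ) (h * spin (σ x)) t := by
  unfold energy
  have h1 : HasDerivAt (fun s => ∑ z, Function.update g x s z * spin (σ z))
      (∑ z, (if z = x then 1 else 0) * spin (σ z)) t :=
    HasDerivAt.fun_sum fun z _ => (hasDerivAt_coord x z g t).mul_const _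
  have h2 := (h1.const_mul h).const_add (β * ((1 : ℝ) / 2 * ∑ x : {x // x ∈ box d n},
    ∑ y : {x // x ∈ box d n},
      if (∑ i, |x.1 i - y.1 i|) = 1 then spin (σ x) * spin (σ y) else 0))
  simpa using h2

theorem Z_pos (d n : ℕ) (β h : ℝ) (g : Site d n → ℝ) : 0 < Z d n β h g :=
  Finset.sum_pos (fun _ _ => Real.exp_pos _) Finset.univ_nonempty

theorem hasDerivAt_num {d n : ℕ} (β h : ℝ) (f : Config d n → ℝ) (x : Site d n)
    (g : Site d n → ℝ) (t : ℝ) :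
    HasDerivAt (fun s => ∑ σ : Config d n, f σ * Real.exp (energy d n β h (Function.update g x s) σ))
      (h * ∑ σ : Config d n, (f σ * spin (σ x)) *
        Real.exp (energy d n β h (Function.update g x t) σ)) t := by
  rw [Finset.mul_sum]
  refine HasDerivAt.fun_sum fun σ _ => ?_
  have := ((hasDerivAt_energy β h x g σ t).exp).const_mul (f σ)
  exact this.congr_deriv (by ring)

theorem hasDerivAt_Z {d n : ℕ} (β h : ℝ) (x : Site d n) (g : Site d n → ℝ) (t : ℝ) :
    HasDerivAt (fun s => Z d n β h (Function.update g x s))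
      (h * ∑ σ : Config d n, spin (σ x) *
        Real.exp (energy d n β h (Function.update g x t) σ)) t := by
  simpa [Z] using hasDerivAt_num β h (fun _ => 1) x g t

theorem hasDerivAt_logZ {d n : ℕ} (β h : ℝ) (x : Site d n) (g : Site d n → ℝ) (t : ℝ) :
    HasDerivAt (fun s => Real.log (Z d n β h (Function.update g x s)))
      (h * gibbs d n β h (Function.update g x t) (fun σ => spin (σ x))) t := by
  have := (hasDerivAt_Z β h x g t).log (Z_pos d n β h _).ne'
  refine this.congr_deriv ?_
  unfold gibbs
  ring

theorem hasDerivAt_gibbs {d n : ℕ} (β h : ℝ) (f : Config d n → ℝ) (x : Site d n)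
    (g : Site d n → ℝ) (t : ℝ) :
    HasDerivAt (fun s => gibbs d n β h (Function.update g x s) f)
      (h * (gibbs d n β h (Function.update g x t) (fun σ => f σ * spin (σ x)) +
        (-1) * (gibbs d n β h (Function.update g x t) f *
          gibbs d n β h (Function.update g x t) (fun σ => spin (σ x))))) t := by
  have hz := (Z_pos d n β h (Function.update g x t)).ne'
  have := (hasDerivAt_num β h f x g t).div (hasDerivAt_Z β h x g t) hz
  refine this.congr_deriv ?_
  unfold gibbs Z
  unfold Z at hz
  field_simp
  ring

theorem abs_gibbs_le {d n : ℕ} (β h : ℝ) (f : Config d n → ℝ) (C : ℝ) (hf : ∀ σ, |f σ| ≤ C)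
    (g : Site d n → ℝ) : |gibbs d n β h g f| ≤ C := by
  unfold gibbs
  rw [abs_div, abs_of_pos (Z_pos d n β h g), div_le_iff₀ (Z_pos d n β h g)]
  refine (Finset.abs_sum_le_sum_abs _ _).trans ?_
  unfold Z
  rw [Finset.mul_sum]
  refine Finset.sum_le_sum fun σ _ => ?_
  rw [abs_mul, abs_of_pos (Real.exp_pos _)]
  exact mul_le_mul_of_nonneg_right (hf σ) (Real.exp_pos _).le

theorem continuous_gibbs {d n : ℕ} (β h : ℝ) (f : Config d n → ℝ) :
    Continuous (fun g => gibbs d n β h g f) := by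
  have he : ∀ σ : Config d n, Continuous (fun g => energy d n β h g σ) := by
    intro σ
    unfold energy
    fun_prop
  have hz : Continuous (fun g => Z d n β h g) := by
    unfold Z
    fun_prop
  unfold gibbs
  exact Continuous.div (by fun_prop) hz fun g => (Z_pos d n β h g).ne'

/-- Functions of the disorder built from Gibbs averages and coordinates. -/
inductive Nice (d n : ℕ) (β h : ℝ) : ((Site d n → ℝ) → ℝ) → Prop
  | const (c : ℝ) : Nice d n β h (fun _ => c)
  | coord (z : Site d n) : Nice d n β h (fun g => g z)
  | gibbs (f : Config d n → ℝ) : Nice d n β h (fun g => gibbs d n β h g f)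
  | add {F G : (Site d n → ℝ) → ℝ} : Nice d n β h F → Nice d n β h G →
      Nice d n β h (fun g => F g + G g)
  | mul {F G : (Site d n → ℝ) → ℝ} : Nice d n β h F → Nice d n β h G →
      Nice d n β h (fun g => F g * G g)

theorem Nice.continuous {d n : ℕ} {β h : ℝ} {F : (Site d n → ℝ) → ℝ} (hF : Nice d n β h F) :
    Continuous F := by
  induction hF with
  | const c => exact continuous_const
  | coord z => exact continuous_apply z
  | gibbs f => exact continuous_gibbs β h f
  | add _ _ h1 h2 => exact h1.add h2
  | mul _ _ h1 h2 => exact h1.mul h2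

theorem Nice.exists_deriv {d n : ℕ} {β h : ℝ} {F : (Site d n → ℝ) → ℝ} (hF : Nice d n β h F)
    (x : Site d n) : ∃ F', Nice d n β h F' ∧ ∀ g t,
      HasDerivAt (fun s => F (Function.update g x s)) (F' (Function.update g x t)) t := by
  induction hF with
  | const c => exact ⟨_, .const 0, fun g t => hasDerivAt_const t c⟩
  | coord z => exact ⟨_, .const (if z = x then 1 else 0), fun g t => hasDerivAt_coord x z g t⟩
  | gibbs f =>
    exact ⟨_, .mul (.const h) (.add (.gibbs _) (.mul (.const (-1)) (.mul (.gibbs f) (.gibbs _)))),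
      fun g t => hasDerivAt_gibbs β h f x g t⟩
  | add _ _ h1 h2 =>
    obtain ⟨F', hF', h1⟩ := h1
    obtain ⟨G', hG', h2⟩ := h2
    exact ⟨_, .add hF' hG', fun g t => (h1 g t).add (h2 g t)⟩
  | mul hF hG h1 h2 =>
    obtain ⟨F', hF', h1⟩ := h1
    obtain ⟨G', hG', h2⟩ := h2
    exact ⟨_, .add (.mul hF' hG) (.mul hF hG'), fun g t => (h1 g t).mul (h2 g t)⟩

theorem pd_eq {d n : ℕ} {F F' : (Site d n → ℝ) → ℝ} {x : Site d n}
    (hF : ∀ g t, HasDerivAt (fun s => F (Function.update g x s)) (F' (Function.update g x t)) t) :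
    pd x F = F' := by
  funext g
  have := (hF g (g x)).deriv
  rw [Function.update_eq_self] at this
  exact this

theorem Nice.pd {d n : ℕ} {β h : ℝ} {F : (Site d n → ℝ) → ℝ} (hF : Nice d n β h F)
    (x : Site d n) : Nice d n β h (pd x F) := by
  obtain ⟨F', hF', h1⟩ := hF.exists_deriv x
  rwa [pd_eq h1]

theorem Nice.hasDerivAt {d n : ℕ} {β h : ℝ} {F : (Site d n → ℝ) → ℝ} (hF : Nice d n β h F)
    (x : Site d n) (g : Site d n → ℝ) (t : ℝ) :
    HasDerivAt (fun s => F (Function.update g x s)) (_root_.pd x F (Function.update g x t)) t := by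
  obtain ⟨F', hF', h1⟩ := hF.exists_deriv x
  rw [pd_eq h1]
  exact h1 g t

theorem pd_mul {d n : ℕ} {β h : ℝ} {F G : (Site d n → ℝ) → ℝ} (hF : Nice d n β h F)
    (hG : Nice d n β h G) (x : Site d n) :
    pd x (fun g => F g * G g) = fun g => pd x F g * G g + F g * pd x G g :=
  pd_eq fun g t => (hF.hasDerivAt x g t).mul (hG.hasDerivAt x g t)

theorem pd_add {d n : ℕ} {β h : ℝ} {F G : (Site d n → ℝ) → ℝ} (hF : Nice d n β h F)
    (hG : Nice d n β h G) (x : Site d n) :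
    pd x (fun g => F g + G g) = fun g => pd x F g + pd x G g :=
  pd_eq fun g t => (hF.hasDerivAt x g t).add (hG.hasDerivAt x g t)

theorem pd_const {d n : ℕ} (c : ℝ) (x : Site d n) :
    pd x (fun _ => c) = fun _ => 0 :=
  pd_eq fun _ t => hasDerivAt_const t c

theorem pd_coord {d n : ℕ} (x z : Site d n) :
    pd x (fun g => g z) = fun _ => if z = x then 1 else 0 :=
  pd_eq fun g t => hasDerivAt_coord x z g t

instance (d n : ℕ) : IsProbabilityMeasure (μdis d n) := by
  unfold μdis; infer_instance

theorem Nice.memLp {d n : ℕ} {β h : ℝ} {F : (Site d n → ℝ) → ℝ} (hF : Nice d n β h F) :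
    ∀ p : NNReal, MemLp F p (μdis d n) := by
  induction hF with
  | const c => exact fun p => memLp_const c
  | coord z =>
    intro p
    have hm : MeasurePreserving (Function.eval z) (μdis d n) (gaussianReal 0 1) :=
      measurePreserving_eval _ z
    exact (memLp_id_gaussianReal p).comp_measurePreserving hm
  | gibbs f =>
    intro p
    refine MemLp.of_bound (continuous_gibbs β h f).aestronglyMeasurable (∑ σ, |f σ|)
      (ae_of_all _ fun g => ?_)
    exact abs_gibbs_le β h f _
      (fun σ => Finset.single_le_sum (f := fun σ => |f σ|) (fun _ _ => abs_nonneg _)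
        (Finset.mem_univ σ)) g
  | add _ _ h1 h2 => exact fun p => (h1 p).add (h2 p)
  | mul _ _ h1 h2 =>
    intro p
    haveI : ENNReal.HolderTriple (2 * p : NNReal) (2 * p : NNReal) p := by
      constructor
      push_cast
      rw [ENNReal.mul_inv (by simp) (by simp), ← add_mul, ENNReal.inv_two_add_inv_two, one_mul]
    exact (h2 (2 * p)).mul (h1 (2 * p))

theorem Nice.integrable {d n : ℕ} {β h : ℝ} {F : (Site d n → ℝ) → ℝ} (hF : Nice d n β h F) :
    Integrable F (μdis d n) :=
  memLp_one_iff_integrable.1 (by simpa using hF.memLp 1)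

theorem stein_one {u u' : ℝ → ℝ} (hu : ∀ t, HasDerivAt u (u' t) t)
    (h1 : Integrable u (gaussianReal 0 1)) (h2 : Integrable u' (gaussianReal 0 1))
    (h3 : Integrable (fun t => t * u t) (gaussianReal 0 1)) :
    ∫ t, u' t ∂(gaussianReal 0 1) = ∫ t, t * u t ∂(gaussianReal 0 1) := by
  have key : ∀ v : ℝ → ℝ, Integrable v (gaussianReal 0 1) →
      Integrable (fun t => gaussianPDFReal 0 1 t * v t) := by
    intro v hv
    rw [gaussianReal_of_var_ne_zero 0 one_ne_zero,
      integrable_withDensity_iff_integrable_smul' (measurable_gaussianPDF 0 1)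
        (ae_of_all _ fun _ => gaussianPDF_lt_top)] at hv
    simpa [toReal_gaussianPDF] using hv
  have hφ : ∀ t, HasDerivAt (gaussianPDFReal 0 1) (-t * gaussianPDFReal 0 1 t) t := by
    intro t
    have : HasDerivAt (fun s : ℝ => -(s - 0) ^ 2 / (2 * ((1 : NNReal) : ℝ))) (-t) t := by
      have := (((hasDerivAt_id t).sub_const 0).pow 2).neg.div_const (2 * ((1 : NNReal) : ℝ))
      exact this.congr_deriv (by simp; ring)
    have := (this.exp).const_mul (√(2 * π * ((1 : NNReal) : ℝ)))⁻¹
    rw [gaussianPDFReal_def]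
    exact this.congr_deriv (by ring)
  have hz := integral_eq_zero_of_hasDerivAt_of_integrable
    (f := fun t => gaussianPDFReal 0 1 t * u t)
    (f' := fun t => gaussianPDFReal 0 1 t * (u' t - t * u t))
    (fun t => by
      exact ((hφ t).mul (hu t)).congr_deriv (by ring)) (key _ (h2.sub h3)) (key _ h1)
  have := integral_gaussianReal_eq_integral_smul (μ := 0) (v := 1) (f := fun t => u' t - t * u t)
    one_ne_zero
  simp only [smul_eq_mul] at this
  rw [hz, integral_sub h2 h3] at this
  linarith

theorem mp_update {d n : ℕ} (x : Site d n) :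
    MeasurePreserving (fun p : (Site d n → ℝ) × ℝ => Function.update p.1 x p.2)
      ((μdis d n).prod (gaussianReal 0 1)) (μdis d n) := by
  have hm : Measurable (fun p : (Site d n → ℝ) × ℝ => Function.update p.1 x p.2) := by
    rw [measurable_pi_iff]
    intro z
    by_cases hz : z = x
    · subst hz; simpa using measurable_snd
    · simp only [Function.update_of_ne hz]; fun_prop
  refine ⟨hm, ?_⟩
  unfold μdis
  refine (Measure.pi_eq fun s hs => ?_).symm
  rw [Measure.map_apply hm (MeasurableSet.univ_pi hs)]
  have : (fun p : (Site d n → ℝ) × ℝ => Function.update p.1 x p.2) ⁻¹' (Set.univ.pi s)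
      = (Set.univ.pi (Function.update s x Set.univ)) ×ˢ (s x) := by
    ext p
    simp only [Set.mem_preimage, Set.mem_pi, Set.mem_univ, true_imp_iff, Set.mem_prod]
    constructor
    · intro hp
      refine ⟨fun i => ?_, by simpa using hp x⟩
      by_cases hi : i = x
      · subst hi; simp
      · simpa [hi] using hp i
    · rintro ⟨h1, h2⟩ i
      by_cases hi : i = x
      · subst hi; simpa using h2
      · simpa [hi] using h1 i
  rw [this, Measure.prod_prod, Measure.pi_pi, ← Finset.mul_prod_erase _ _ (Finset.mem_univ x),
    ← Finset.mul_prod_erase (a := x) _ (fun i => (gaussianReal 0 1) (s i)) (Finset.mem_univ x)]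
  simp only [Function.update_self, measure_univ, one_mul]
  rw [mul_comm]
  congr 1
  refine Finset.prod_congr rfl fun i hi => ?_
  rw [Function.update_of_ne (Finset.ne_of_mem_erase hi)]

theorem Nice.stein {d n : ℕ} {β h : ℝ} {F : (Site d n → ℝ) → ℝ} (hF : Nice d n β h F)
    (x : Site d n) : ∫ g, _root_.pd x F g ∂(μdis d n) = ∫ g, g x * F g ∂(μdis d n) := by
  have hm := mp_update x
  have e : ∀ G : (Site d n → ℝ) → ℝ, Nice d n β h G →
      Integrable (fun p : (Site d n → ℝ) × ℝ => G (Function.update p.1 x p.2))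
        ((μdis d n).prod (gaussianReal 0 1)) ∧
      ∫ g, G g ∂(μdis d n) =
        ∫ g, ∫ t, G (Function.update g x t) ∂(gaussianReal 0 1) ∂(μdis d n) := by
    intro G hG
    have hi : Integrable (fun p : (Site d n → ℝ) × ℝ => G (Function.update p.1 x p.2))
        ((μdis d n).prod (gaussianReal 0 1)) := hm.integrable_comp_of_integrable hG.integrable
    refine ⟨hi, ?_⟩
    rw [← integral_prod _ hi]
    conv_lhs => rw [← hm.map_eq]
    exact integral_map hm.measurable.aemeasurable hG.continuous.aestronglyMeasurable
  have hxF : Nice d n β h (fun g => g x * F g) := .mul (.coord x) hF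
  rw [(e _ (hF.pd x)).2, (e _ hxF).2]
  refine integral_congr_ae ?_
  filter_upwards [(e _ (hF.pd x)).1.prod_right_ae, (e _ hxF).1.prod_right_ae,
    (e _ hF).1.prod_right_ae] with g h1 h2 h3
  have h2' : Integrable (fun t => t * F (Function.update g x t)) (gaussianReal 0 1) := by
    simpa using h2
  have := stein_one (hF.hasDerivAt x g) h3 h1 h2'
  simpa using this

theorem stein_mul {d n : ℕ} {β h : ℝ} {w F : (Site d n → ℝ) → ℝ} (hw : Nice d n β h w)
    (hF : Nice d n β h F) (x : Site d n) :
    ∫ g, w g * pd x F g ∂(μdis d n) = ∫ g, (g x * w g + (-1) * pd x w g) * F g ∂(μdis d n) := by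
  have := (Nice.mul hw hF).stein x
  rw [pd_mul hw hF x, integral_add (Nice.mul (hw.pd x) hF).integrable
    (Nice.mul hw (hF.pd x)).integrable] at this
  have e : ∀ g : Site d n → ℝ, (g x * w g + (-1) * pd x w g) * F g =
      g x * (w g * F g) - pd x w g * F g := fun g => by ring
  simp_rw [e]
  rw [integral_sub (Nice.mul (.coord x) (.mul hw hF)).integrable
    (Nice.mul (hw.pd x) hF).integrable, ← this]
  ring

/-- The third-order Hermite functions. -/
def tt {d n : ℕ} (x y : Site d n) (g : Site d n → ℝ) : ℝ :=
  g x * (g x * g y) + ((-1) * g y + (-2 * (if y = x then 1 else 0)) * g x)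

theorem nice_tt {d n : ℕ} (β h : ℝ) (x y : Site d n) : Nice d n β h (tt x y) :=
  .add (.mul (.coord x) (.mul (.coord x) (.coord y)))
    (.add (.mul (.const _) (.coord y)) (.mul (.const _) (.coord x)))

theorem adj {d n : ℕ} {β h : ℝ} {F : (Site d n → ℝ) → ℝ} (hF : Nice d n β h F)
    (x y : Site d n) :
    ∫ g, pd x (pd x (pd y F)) g ∂(μdis d n) = ∫ g, tt x y g * F g ∂(μdis d n) := by
  rw [((hF.pd y).pd x).stein x, stein_mul (.coord x) (hF.pd y) x, pd_coord]
  have hN : Nice d n β h (fun g => g x * g x + (-1) * (if x = x then 1 else 0)) :=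
    .add (.mul (.coord x) (.coord x)) (.mul (.const _) (.const _))
  rw [stein_mul hN hF y]
  congr 1
  funext g
  rw [pd_add (β := β) (h := h) (.mul (.coord x) (.coord x)) (.mul (.const _) (.const _)),
    pd_mul (β := β) (h := h) (.coord x) (.coord x), pd_mul (β := β) (h := h) (.const _) (.const _),
    pd_coord, pd_const, pd_const]
  by_cases hxy : x = y
  · subst hxy; simp only [tt, if_true]; ring
  · simp only [tt, hxy, Ne.symm hxy, if_true, if_false]; ring

theorem ortho {d n : ℕ} (x x' y : Site d n) :
    ∫ g, tt x y g * tt x' y g ∂(μdis d n) =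
      if x = x' then (if x = y then 6 else 2) else 0 := by
  rw [← adj (nice_tt 0 0 x' y)]
  have e1 : pd y (tt x' y) = fun g => g x' * g x' + ((if x' = y then 2 else 0) * (g y * g x') +
      (-1 + (if x' = y then -2 else 0))) := by
    unfold tt
    rw [pd_add (β := 0) (h := 0) (.mul (.coord _) (.mul (.coord _) (.coord _)))
      (.add (.mul (.const _) (.coord _)) (.mul (.const _) (.coord _))),
      pd_add (β := 0) (h := 0) (.mul (.const _) (.coord _)) (.mul (.const _) (.coord _)),
      pd_mul (β := 0) (h := 0) (.coord _) (.mul (.coord _) (.coord _)),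
      pd_mul (β := 0) (h := 0) (.coord _) (.coord _),
      pd_mul (β := 0) (h := 0) (.const _) (.coord _),
      pd_mul (β := 0) (h := 0) (.const _) (.coord _), pd_coord, pd_coord, pd_const, pd_const]
    funext g
    by_cases hxy : x' = y
    · subst hxy; simp; ring
    · simp [hxy, Ne.symm hxy]
  have e2 : pd x (pd y (tt x' y)) = fun g => (if x' = x then 2 else 0) * g x' +
      (if x' = y then (if x' = x then 4 else 0) else 0) * g x' := by
    rw [e1, pd_add (β := 0) (h := 0) (.mul (.coord _) (.coord _))
      (.add (.mul (.const _) (.mul (.coord _) (.coord _))) (.const _)),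
      pd_add (β := 0) (h := 0) (.mul (.const _) (.mul (.coord _) (.coord _))) (.const _),
      pd_mul (β := 0) (h := 0) (.coord _) (.coord _),
      pd_mul (β := 0) (h := 0) (.const _) (.mul (.coord _) (.coord _)),
      pd_mul (β := 0) (h := 0) (.coord _) (.coord _), pd_coord, pd_coord, pd_const, pd_const]
    funext g
    by_cases hxy : x' = y
    · subst hxy
      by_cases hx : x' = x
      · subst hx; simp; ring
      · simp [hx]
    · by_cases hx : x' = x
      · subst hx; simp [hxy]; ring
      · simp [hx, hxy]
  have e3 : pd x (pd x (pd y (tt x' y))) = fun g =>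
      if x = x' then (if x = y then 6 else 2) else 0 := by
    rw [e2, pd_add (β := 0) (h := 0) (.mul (.const _) (.coord _)) (.mul (.const _) (.coord _)),
      pd_mul (β := 0) (h := 0) (.const _) (.coord _),
      pd_mul (β := 0) (h := 0) (.const _) (.coord _), pd_coord, pd_const, pd_const]
    funext g
    by_cases hx : x' = x
    · subst hx
      by_cases hxy : x' = y
      · simp [hxy]; norm_num
      · simp [hxy]
    · simp [hx, Ne.symm hx]
  rw [e3]
  simp

theorem nice_sum {d n : ℕ} {β h : ℝ} (s : Finset (Site d n)) (F : Site d n → (Site d n → ℝ) → ℝ)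
    (hF : ∀ x, Nice d n β h (F x)) : Nice d n β h (fun g => ∑ x ∈ s, F x g) := by
  classical
  induction s using Finset.induction_on with
  | empty => simpa using Nice.const 0
  | insert a s ha ih =>
    simp only [Finset.sum_insert ha]
    exact .add (hF a) ih

theorem bessel {d n : ℕ} {β h : ℝ} {f : (Site d n → ℝ) → ℝ} (hf : Nice d n β h f)
    (y : Site d n) :
    ∑ x, (∫ g, tt x y g * f g ∂(μdis d n)) ^ 2 ≤ 6 * ∫ g, f g * f g ∂(μdis d n) := by
  set a : Site d n → ℝ := fun x => ∫ g, tt x y g * f g ∂(μdis d n) with ha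
  change ∑ x, a x ^ 2 ≤ _
  set T : (Site d n → ℝ) → ℝ := fun g => ∑ x, a x * tt x y g with hT
  have hTN : Nice d n β h T := nice_sum _ _ fun x => .mul (.const _) (nice_tt β h x y)
  have h1 : ∫ g, T g * f g ∂(μdis d n) = ∑ x, a x ^ 2 := by
    simp only [hT, Finset.sum_mul, mul_assoc]
    rw [integral_finsetSum _ fun x _ => (Nice.mul (.const (a x))
      (.mul (nice_tt β h x y) hf)).integrable]
    refine Finset.sum_congr rfl fun x _ => ?_
    rw [integral_const_mul, sq]
  have h2 : ∫ g, T g * T g ∂(μdis d n) ≤ 6 * ∑ x, a x ^ 2 := by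
    have : ∀ g, T g * T g = ∑ x, ∑ x', (a x * a x') * (tt x y g * tt x' y g) := by
      intro g
      simp only [hT, Finset.sum_mul_sum]
      refine Finset.sum_congr rfl fun x _ => Finset.sum_congr rfl fun x' _ => ?_
      ring
    simp_rw [this]
    have hI : ∀ x x', Nice d n β h (fun g => (a x * a x') * (tt x y g * tt x' y g)) :=
      fun x x' => .mul (.const _) (.mul (nice_tt β h x y) (nice_tt β h x' y))
    rw [integral_finsetSum _ fun x _ => (nice_sum _ _ (hI x)).integrable, Finset.mul_sum]
    refine Finset.sum_le_sum fun x _ => ?_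
    rw [integral_finsetSum _ fun x' _ => (hI x x').integrable]
    simp_rw [integral_const_mul, ortho]
    simp only [mul_ite, mul_zero, Finset.sum_ite_eq, Finset.mem_univ, if_true]
    split_ifs <;> nlinarith [sq_nonneg (a x)]
  have h3 : 0 ≤ ∫ g, (f g + (-1 / 6) * T g) * (f g + (-1 / 6) * T g) ∂(μdis d n) :=
    integral_nonneg fun g => mul_self_nonneg _
  have e : ∀ g, (f g + (-1 / 6) * T g) * (f g + (-1 / 6) * T g) =
      f g * f g + ((-1 / 3) * (T g * f g) + (1 / 36) * (T g * T g)) := fun g => by ring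
  simp_rw [e] at h3
  rw [integral_add (Nice.mul hf hf).integrable (Nice.add (.mul (.const _) (.mul hTN hf))
      (.mul (.const _) (.mul hTN hTN))).integrable,
    integral_add (Nice.mul (.const _) (.mul hTN hf)).integrable
      (Nice.mul (.const _) (.mul hTN hTN)).integrable, integral_const_mul, integral_const_mul,
    h1] at h3
  linarith

/-- Bound on the mixed fourth partial derivatives of the log-partition function
with respect to the Gaussian disorder variables:
`∑_{x,y} (E ∂⁴F_n/∂g_x²∂g_y²)² ≤ 24 h² |V_n|`. -/
theorem fourth_partials_bound (d n : ℕ) (β h : ℝ) (hβ : 0 < β) (hh : 0 < h) :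
    ∑ x : {x // x ∈ box d n}, ∑ y : {x // x ∈ box d n},
        (∫ g, pd x (pd x (pd y (pd y
            (fun g' => Real.log (Z d n β h g'))))) g ∂(μdis d n)) ^ 2
      ≤ 24 * h ^ 2 * ((box d n).card : ℝ) := by
  rw [Finset.sum_comm]
  have key : ∀ y : Site d n, ∑ x : Site d n, (∫ g, pd x (pd x (pd y (pd y
      (fun g' => Real.log (Z d n β h g'))))) g ∂(μdis d n)) ^ 2 ≤ 24 * h ^ 2 := by
    intro y
    have e : pd y (fun g' => Real.log (Z d n β h g')) =
        fun g => h * gibbs d n β h g (fun σ => spin (σ y)) :=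
      pd_eq fun g t => hasDerivAt_logZ β h y g t
    have hf : Nice d n β h (fun g => h * gibbs d n β h g (fun σ => spin (σ y))) :=
      .mul (.const h) (.gibbs _)
    rw [e]
    simp_rw [fun x => adj hf x y]
    refine (bessel hf y).trans ?_
    have : ∫ g, (h * gibbs d n β h g (fun σ => spin (σ y))) *
        (h * gibbs d n β h g (fun σ => spin (σ y))) ∂(μdis d n) ≤ ∫ _, h ^ 2 ∂(μdis d n) := by
      refine integral_mono (Nice.mul hf hf).integrable (integrable_const _) fun g => ?_
      have hb := abs_gibbs_le β h (fun σ : Config d n => spin (σ y)) 1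
        (fun σ => by unfold spin; split_ifs <;> simp) g
      have := (sq_le_one_iff_abs_le_one _).2 hb
      simp only
      nlinarith [sq_nonneg h]
    simp at this
    nlinarith [sq_nonneg h]
  refine (Finset.sum_le_sum fun y _ => key y).trans ?_
  simp
  linarith
end

section
/- For the random field Ising model on V_n with Gaussian disorder and β, h > 0, the overlap R_{1,2} = |V_n|^{-1} Σ_{x∈V_n} σ_x¹ σ_x² of two independent replicas satisfies E(⟨R_{1,2}²⟩ − ⟨R_{1,2}⟩²) ≤ 2√(2+h²)/(h√|V_n|). -/
open Finset MeasureTheory ProbabilityTheory Real Filter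

namespace RFIM
variable {d n : ℕ} {β h : ℝ}

lemma spin_abs (b : Bool) : |spin b| = 1 := by cases b <;> simp [spin]

lemma Z_pos (g : {x // x ∈ box d n} → ℝ) : 0 < Z d n β h g :=
  Finset.sum_pos (fun _ _ => Real.exp_pos _) Finset.univ_nonempty

lemma gibbs_abs_le (g : {x // x ∈ box d n} → ℝ) (f : Config d n → ℝ) (C : ℝ)
    (hf : ∀ σ, |f σ| ≤ C) : |gibbs d n β h g f| ≤ C := by
  unfold gibbs
  rw [abs_div, abs_of_pos (Z_pos g), div_le_iff₀ (Z_pos g)]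
  refine (Finset.abs_sum_le_sum_abs _ _).trans ?_
  rw [Z, Finset.mul_sum]
  refine Finset.sum_le_sum fun σ _ => ?_
  rw [abs_mul, abs_of_pos (Real.exp_pos _)]
  exact mul_le_mul_of_nonneg_right (hf σ) (Real.exp_pos _).le

lemma continuous_energy (σ : Config d n) : Continuous fun g => energy d n β h g σ := by
  unfold energy; fun_prop

lemma continuous_gibbs (f : Config d n → ℝ) : Continuous fun g => gibbs d n β h g f := by
  unfold gibbs
  refine Continuous.div ?_ ?_ (fun g => (Z_pos g).ne')
  · exact continuous_finsetSum _ fun σ _ =>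
      continuous_const.mul (Real.continuous_exp.comp (continuous_energy σ))
  · unfold Z
    exact continuous_finsetSum _ fun σ _ =>
      (Real.continuous_exp.comp (continuous_energy σ))

lemma gibbs_sum {κ : Type*} (s : Finset κ) (g : {x // x ∈ box d n} → ℝ)
    (f : κ → Config d n → ℝ) :
    gibbs d n β h g (fun σ => ∑ k ∈ s, f k σ) = ∑ k ∈ s, gibbs d n β h g (f k) := by
  unfold gibbs
  rw [← Finset.sum_div, Finset.sum_comm]
  simp_rw [Finset.sum_mul]

lemma energy_update (g : {x // x ∈ box d n} → ℝ) (y : {x // x ∈ box d n}) (t : ℝ)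
    (σ : Config d n) :
    energy d n β h (Function.update g y t) σ
      = energy d n β h g σ + h * ((t - g y) * spin (σ y)) := by
  unfold energy
  have : ∑ x, Function.update g y t x * spin (σ x)
      = ∑ x, g x * spin (σ x) + (t - g y) * spin (σ y) := by
    rw [← Finset.add_sum_erase _ _ (Finset.mem_univ y),
      ← Finset.add_sum_erase _ (fun x => g x * spin (σ x)) (Finset.mem_univ y)]
    rw [Finset.sum_congr rfl (g := fun x => g x * spin (σ x))]
    · simp; ring
    · intro x hx
      rw [Function.update_of_ne (Finset.ne_of_mem_erase hx)]
  rw [this]; ring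

lemma hasDerivAt_sum (g : {x // x ∈ box d n} → ℝ) (y : {x // x ∈ box d n})
    (f : Config d n → ℝ) (t : ℝ) :
    HasDerivAt (fun t => ∑ σ, f σ * Real.exp (energy d n β h (Function.update g y t) σ))
      (h * ∑ σ, (f σ * spin (σ y)) * Real.exp (energy d n β h (Function.update g y t) σ)) t := by
  rw [Finset.mul_sum]
  refine HasDerivAt.fun_sum fun σ _ => ?_
  have h1 : HasDerivAt (fun t => energy d n β h (Function.update g y t) σ) (h * (1 * spin (σ y))) t := by
    simp_rw [energy_update]
    exact ((((hasDerivAt_id t).sub_const (g y)).mul_const (spin (σ y))).const_mul h).const_add _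
  convert! (h1.exp.const_mul (f σ)) using 1
  ring

lemma hasDerivAt_gibbs (g : {x // x ∈ box d n} → ℝ) (y : {x // x ∈ box d n})
    (f : Config d n → ℝ) (t : ℝ) :
    HasDerivAt (fun t => gibbs d n β h (Function.update g y t) f)
      (h * (gibbs d n β h (Function.update g y t) (fun σ => f σ * spin (σ y))
        - gibbs d n β h (Function.update g y t) f
          * gibbs d n β h (Function.update g y t) (fun σ => spin (σ y)))) t := by
  have h1 := hasDerivAt_sum (β := β) (h := h) g y f t
  have h2 : HasDerivAt (fun t => Z d n β h (Function.update g y t))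
      (h * ∑ σ, spin (σ y) * Real.exp (energy d n β h (Function.update g y t) σ)) t := by
    simpa [Z] using hasDerivAt_sum (β := β) (h := h) g y (fun _ => 1) t
  have hZ := (Z_pos (β := β) (h := h) (Function.update g y t)).ne'
  convert! h1.div h2 hZ using 1
  unfold gibbs
  field_simp

/-- One-dimensional Gaussian integration by parts. -/
lemma stein (f f' : ℝ → ℝ) (C C' : ℝ) (hf : ∀ t, |f t| ≤ C) (hf' : ∀ t, |f' t| ≤ C')
    (hd : ∀ t, HasDerivAt f (f' t) t) (hc : Continuous f') :
    ∫ t, t * f t ∂(gaussianReal 0 1) = ∫ t, f' t ∂(gaussianReal 0 1) := by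
  have hcf : Continuous f := continuous_iff_continuousAt.2 fun t => (hd t).continuousAt
  rw [integral_gaussianReal_eq_integral_smul one_ne_zero,
    integral_gaussianReal_eq_integral_smul one_ne_zero]
  have hφ : ∀ t, HasDerivAt (gaussianPDFReal 0 1) (- t * gaussianPDFReal 0 1 t) t := by
    intro t
    unfold gaussianPDFReal
    have h1 : HasDerivAt (fun x : ℝ => -(x - 0) ^ 2 / (2 * ((1 : NNReal) : ℝ))) (-t) t := by
      have := ((((hasDerivAt_id t).sub_const (0:ℝ)).pow 2).neg).div_const (2 * ((1 : NNReal) : ℝ))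
      convert! this using 1
      simp; ring
    convert! (h1.exp.const_mul ((√(2 * π * ((1 : NNReal) : ℝ)))⁻¹)) using 1
    ring
  have hi0 : Integrable (gaussianPDFReal 0 1) := integrable_gaussianPDFReal 0 1
  have hi1 : Integrable (fun t => t * gaussianPDFReal 0 1 t) := by
    have := (integrable_mul_exp_neg_mul_sq (b := 1/2) (by norm_num)).const_mul
      ((√(2 * π * ((1 : NNReal) : ℝ)))⁻¹)
    refine this.congr (Filter.Eventually.of_forall fun t => ?_)
    simp only [gaussianPDFReal]
    rw [show -(1/2 : ℝ) * t^2 = -(t - 0) ^ 2 / (2 * ((1 : NNReal) : ℝ)) by simp; ring]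
    ring
  have i1 : Integrable (fun t => gaussianPDFReal 0 1 t • (t * f t)) := by
    refine (hi1.bdd_mul (c := C) hcf.aestronglyMeasurable
      (Filter.Eventually.of_forall hf)).congr (Filter.Eventually.of_forall fun t => ?_)
    simp; ring
  have i2 : Integrable (fun t => gaussianPDFReal 0 1 t • f' t) := by
    refine (hi0.bdd_mul (c := C') hc.aestronglyMeasurable
      (Filter.Eventually.of_forall hf')).congr (Filter.Eventually.of_forall fun t => ?_)
    simp; ring
  have i3 : Integrable (fun t => gaussianPDFReal 0 1 t * f t) := by
    refine (hi0.bdd_mul (c := C) hcf.aestronglyMeasurable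
      (Filter.Eventually.of_forall hf)).congr (Filter.Eventually.of_forall fun t => ?_)
    simp; ring
  have key := integral_eq_zero_of_hasDerivAt_of_integrable
    (f := fun t => gaussianPDFReal 0 1 t * f t)
    (f' := fun t => gaussianPDFReal 0 1 t • f' t - gaussianPDFReal 0 1 t • (t * f t))
    (fun t => by
      convert! (hφ t).mul (hd t) using 1
      simp; ring) (i2.sub i1) i3
  rw [integral_sub i2 i1] at key
  linarith

instance : IsProbabilityMeasure (μdis d n) := by unfold μdis; infer_instance

lemma mp_update {ι : Type*} [Fintype ι] [DecidableEq ι] (ν : Measure ℝ) [IsProbabilityMeasure ν]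
    (y : ι) : MeasurePreserving (fun p : (ι → ℝ) × ℝ => Function.update p.1 y p.2)
      ((Measure.pi fun _ : ι => ν).prod ν) (Measure.pi fun _ : ι => ν) := by
  have hm : Measurable (fun p : (ι → ℝ) × ℝ => Function.update p.1 y p.2) := by
    refine measurable_pi_lambda _ fun i => ?_
    by_cases hi : i = y
    · subst hi; simpa using measurable_snd
    · simp only [Function.update_of_ne hi]; fun_prop
  refine ⟨hm, ?_⟩
  symm
  refine Measure.pi_eq fun s hs => ?_
  rw [Measure.map_apply hm (MeasurableSet.univ_pi hs)]
  have : (fun p : (ι → ℝ) × ℝ => Function.update p.1 y p.2) ⁻¹' (Set.pi Set.univ s)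
      = (Set.pi Set.univ (Function.update s y Set.univ)) ×ˢ (s y) := by
    ext p
    simp only [Set.mem_preimage, Set.mem_pi, Set.mem_univ, true_implies, Set.mem_prod]
    constructor
    · intro H
      refine ⟨fun i => ?_, by simpa using H y⟩
      by_cases hi : i = y
      · subst hi; simp
      · simpa [hi] using H i
    · rintro ⟨H1, H2⟩ i
      by_cases hi : i = y
      · subst hi; simpa using H2
      · simpa [hi] using H1 i
  rw [this, Measure.prod_prod, Measure.pi_pi,
    ← Finset.prod_erase_mul _ _ (Finset.mem_univ y),
    ← Finset.prod_erase_mul _ (fun i => ν (s i)) (Finset.mem_univ y)]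
  rw [Finset.prod_congr rfl (g := fun i => ν (s i))]
  · simp
  · intro x hx
    rw [Function.update_of_ne (Finset.ne_of_mem_erase hx)]

lemma integrable_bdd (F : ({x // x ∈ box d n} → ℝ) → ℝ) (C : ℝ) (hF : Continuous F)
    (hC : ∀ g, |F g| ≤ C) : Integrable F (μdis d n) :=
  Integrable.of_bound hF.aestronglyMeasurable C (Filter.Eventually.of_forall hC)

lemma memLp_coord (y : {x // x ∈ box d n}) : MemLp (fun g => g y) 2 (μdis d n) :=
  (memLp_id_gaussianReal' 2 (by simp)).comp_measurePreserving
    (measurePreserving_eval (fun _ : {x // x ∈ box d n} => gaussianReal 0 1) y)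

lemma integrable_coord_mul (y : {x // x ∈ box d n}) (F : ({x // x ∈ box d n} → ℝ) → ℝ) (C : ℝ)
    (hF : Continuous F) (hC : ∀ g, |F g| ≤ C) : Integrable (fun g => g y * F g) (μdis d n) := by
  refine (((memLp_coord y).integrable (by norm_num)).bdd_mul (c := C) hF.aestronglyMeasurable
    (Filter.Eventually.of_forall hC)).congr (Filter.Eventually.of_forall fun t => ?_)
  simp; ring

noncomputable def cov (d n : ℕ) (β h : ℝ) (g : {x // x ∈ box d n} → ℝ) (f k : Config d n → ℝ) : ℝ :=
  gibbs d n β h g (fun σ => f σ * k σ) - gibbs d n β h g f * gibbs d n β h g k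

lemma continuous_cov (f k : Config d n → ℝ) : Continuous fun g => cov d n β h g f k := by
  unfold cov
  exact (continuous_gibbs _).sub ((continuous_gibbs _).mul (continuous_gibbs _))

lemma cov_abs_le (f : Config d n → ℝ) (C : ℝ) (hf : ∀ σ, |f σ| ≤ C) (y : {x // x ∈ box d n})
    (g : {x // x ∈ box d n} → ℝ) :
    |cov d n β h g f (fun σ => spin (σ y))| ≤ 2 * C := by
  have a := gibbs_abs_le (β := β) (h := h) g (fun σ => f σ * spin (σ y)) C
    (fun σ => by rw [abs_mul, spin_abs, mul_one]; exact hf σ)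
  have b := gibbs_abs_le (β := β) (h := h) g f C hf
  have c := gibbs_abs_le (β := β) (h := h) g (fun σ => spin (σ y)) 1 (fun σ => (spin_abs _).le)
  unfold cov
  refine (abs_sub _ _).trans ?_
  rw [abs_mul]
  have := mul_le_mul b c (abs_nonneg _) ((abs_nonneg _).trans b)
  linarith

lemma ibp (y : {x // x ∈ box d n}) (f : Config d n → ℝ) (C : ℝ) (hf : ∀ σ, |f σ| ≤ C) :
    ∫ g, g y * gibbs d n β h g f ∂(μdis d n)
      = h * ∫ g, cov d n β h g f (fun σ => spin (σ y)) ∂(μdis d n) := by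
  have mp := mp_update (ι := {x // x ∈ box d n}) (gaussianReal 0 1) y
  have i1 : Integrable (fun g => g y * gibbs d n β h g f) (μdis d n) :=
    integrable_coord_mul y _ C (continuous_gibbs f) (fun g => gibbs_abs_le g f C hf)
  have i2 : Integrable (fun g => h * cov d n β h g f (fun σ => spin (σ y))) (μdis d n) :=
    (integrable_bdd _ (2 * C) (continuous_cov f _) (fun g => cov_abs_le f C hf y g)).const_mul h
  rw [← integral_const_mul]
  unfold μdis at i1 i2 ⊢
  have e1 := mp.integrable_comp_of_integrable i1
  have e2 := mp.integrable_comp_of_integrable i2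
  rw [← mp.map_eq] at i1 i2 ⊢
  rw [integral_map mp.aemeasurable i1.aestronglyMeasurable,
    integral_map mp.aemeasurable i2.aestronglyMeasurable]
  refine (integral_prod _ e1).trans (Eq.trans ?_ (integral_prod _ e2).symm)
  refine integral_congr_ae (Filter.Eventually.of_forall fun g => ?_)
  have hu : Continuous fun t : ℝ => Function.update g y t := continuous_const.update y continuous_id
  have := stein (fun t => gibbs d n β h (Function.update g y t) f)
    (fun t => h * cov d n β h (Function.update g y t) f (fun σ => spin (σ y))) C (|h| * (2 * C))
    (fun t => gibbs_abs_le _ f C hf)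
    (fun t => by
      rw [abs_mul]
      exact mul_le_mul_of_nonneg_left (cov_abs_le f C hf y _) (abs_nonneg h))
    (fun t => hasDerivAt_gibbs g y f t)
    (continuous_const.mul ((continuous_cov f _).comp hu))
  simpa using this

lemma spin_mul_le (a b c e : Bool) :
    spin a * spin b + spin c * spin e ≤ spin (a ⊓ c) * spin (b ⊓ e) + spin (a ⊔ c) * spin (b ⊔ e) := by
  cases a <;> cases b <;> cases c <;> cases e <;> norm_num [spin]

lemma spin_add (a c : Bool) :
    spin a + spin c = spin (a ⊓ c) + spin (a ⊔ c) := by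
  cases a <;> cases c <;> norm_num [spin]

lemma energy_super (hβ : 0 < β) (g : {x // x ∈ box d n} → ℝ) (a b : Config d n) :
    energy d n β h g a + energy d n β h g b
      ≤ energy d n β h g (a ⊓ b) + energy d n β h g (a ⊔ b) := by
  unfold energy
  have h1 : ∑ x, g x * spin (a x) + ∑ x, g x * spin (b x)
      = ∑ x, g x * spin ((a ⊓ b) x) + ∑ x, g x * spin ((a ⊔ b) x) := by
    rw [← Finset.sum_add_distrib, ← Finset.sum_add_distrib]
    refine Finset.sum_congr rfl fun x _ => ?_
    rw [← mul_add, ← mul_add, spin_add]; rfl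
  have h2 : ∀ x y : {x // x ∈ box d n},
      (if (∑ i, |x.1 i - y.1 i|) = 1 then spin (a x) * spin (a y) else 0)
      + (if (∑ i, |x.1 i - y.1 i|) = 1 then spin (b x) * spin (b y) else 0)
      ≤ (if (∑ i, |x.1 i - y.1 i|) = 1 then spin ((a ⊓ b) x) * spin ((a ⊓ b) y) else 0)
      + (if (∑ i, |x.1 i - y.1 i|) = 1 then spin ((a ⊔ b) x) * spin ((a ⊔ b) y) else 0) := by
    intro x y
    split_ifs
    · exact spin_mul_le _ _ _ _
    · simp
  have h3 := Finset.sum_le_sum fun x (_ : x ∈ Finset.univ) =>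
    Finset.sum_le_sum fun y (_ : y ∈ Finset.univ) => h2 x y
  simp only [Finset.sum_add_distrib] at h3
  have h4 := mul_le_mul_of_nonneg_left h3 hβ.le
  have h5 := congrArg (fun z => h * z) h1
  linarith

lemma spin_mono : Monotone spin := by
  intro a b hab
  cases a <;> cases b
  · rfl
  · norm_num [spin]
  · exact absurd hab (by decide)
  · rfl

lemma cov_nonneg (hβ : 0 < β) (g : {x // x ∈ box d n} → ℝ) (x y : {x // x ∈ box d n}) :
    0 ≤ cov d n β h g (fun σ => spin (σ x)) (fun σ => spin (σ y)) := by
  have key := fkg (α := Config d n) (μ := fun σ => Real.exp (energy d n β h g σ))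
    (f := fun σ => 1 + spin (σ x)) (g := fun σ => 1 + spin (σ y))
    (fun σ => (Real.exp_pos _).le)
    (fun σ => by have := (abs_le.1 (spin_abs (σ x)).le).1; simp only [Pi.zero_apply]; linarith)
    (fun σ => by have := (abs_le.1 (spin_abs (σ y)).le).1; simp only [Pi.zero_apply]; linarith)
    (fun a b hab => by have := spin_mono (hab x); simp only; linarith)
    (fun a b hab => by have := spin_mono (hab y); simp only; linarith)
    (fun a b => by
      rw [← Real.exp_add, ← Real.exp_add, Real.exp_le_exp]; exact energy_super hβ g a b)
  have hZ := Z_pos (β := β) (h := h) g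
  unfold cov gibbs
  rw [sub_nonneg, div_mul_div_comm, div_le_div_iff₀ (by positivity) hZ]
  simp only [mul_add, add_mul, mul_one, one_mul, Finset.sum_add_distrib] at key
  have eZ : ∑ σ : Config d n, Real.exp (energy d n β h g σ) = Z d n β h g := rfl
  rw [eZ] at key
  have e1 : ∀ f : Config d n → ℝ, ∑ σ, f σ * Real.exp (energy d n β h g σ)
    = ∑ σ, Real.exp (energy d n β h g σ) * f σ := fun f => by simp_rw [mul_comm]
  rw [e1 (fun σ => spin (σ x)), e1 (fun σ => spin (σ y)), e1 (fun σ => spin (σ x) * spin (σ y))]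
  nlinarith

lemma gibbs2_sum {κ : Type*} (s : Finset κ) (g : {x // x ∈ box d n} → ℝ) (c : ℝ)
    (f : κ → Config d n → ℝ) :
    gibbs2 d n β h g (fun σ1 σ2 => c * ∑ k ∈ s, f k σ1 * f k σ2)
      = c * ∑ k ∈ s, (gibbs d n β h g (f k)) ^ 2 := by
  unfold gibbs2 gibbs
  simp_rw [div_pow]
  rw [← Finset.sum_div, mul_div_assoc']
  congr 1
  simp_rw [sq, Finset.sum_mul_sum, Finset.mul_sum, Finset.sum_mul]
  rw [Finset.sum_comm' (s := s) (t := fun _ => Finset.univ) (t' := Finset.univ) (s' := fun _ => s)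
    (by simp)]
  refine Finset.sum_congr rfl fun a _ => ?_
  rw [Finset.sum_comm]
  refine Finset.sum_congr rfl fun k _ => Finset.sum_congr rfl fun b _ => ?_
  ring

lemma pointwise (hβ : 0 < β) (g : {x // x ∈ box d n} → ℝ) :
    gibbs2 d n β h g (fun σ1 σ2 => (overlap d n σ1 σ2) ^ 2)
        - (gibbs2 d n β h g (overlap d n)) ^ 2
      = (((box d n).card : ℝ)⁻¹) ^ 2 * ∑ p : {x // x ∈ box d n} × {x // x ∈ box d n},
        ((gibbs d n β h g fun σ => spin (σ p.1) * spin (σ p.2)) ^ 2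
          - (gibbs d n β h g fun σ => spin (σ p.1)) ^ 2
           * (gibbs d n β h g fun σ => spin (σ p.2)) ^ 2) := by
  have e1 : (fun σ1 σ2 => (overlap d n σ1 σ2) ^ 2) = fun σ1 σ2 => (((box d n).card : ℝ)⁻¹) ^ 2
      * ∑ p : {x // x ∈ box d n} × {x // x ∈ box d n},
        (spin (σ1 p.1) * spin (σ1 p.2)) * (spin (σ2 p.1) * spin (σ2 p.2)) := by
    funext σ1 σ2
    rw [overlap, mul_pow, sq (∑ x, _), Finset.sum_mul_sum, Fintype.sum_prod_type]
    congr 1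
    refine Finset.sum_congr rfl fun a _ => Finset.sum_congr rfl fun b _ => ?_
    ring
  have e2 : overlap d n = fun σ1 σ2 => ((box d n).card : ℝ)⁻¹
      * ∑ x : {x // x ∈ box d n}, spin (σ1 x) * spin (σ2 x) := rfl
  rw [e1, e2, gibbs2_sum _ g _ (fun (p : {x // x ∈ box d n} × {x // x ∈ box d n}) (σ : Config d n) =>
      spin (σ p.1) * spin (σ p.2)),
    gibbs2_sum _ g _ (fun (x : {x // x ∈ box d n}) (σ : Config d n) => spin (σ x)), mul_pow, ← mul_sub, Finset.sum_sub_distrib]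
  congr 2
  rw [sq (∑ x, _), Finset.sum_mul_sum, Fintype.sum_prod_type]

lemma pointwise_le (hβ : 0 < β) (g : {x // x ∈ box d n} → ℝ) (x y : {x // x ∈ box d n}) :
    ((gibbs d n β h g fun σ => spin (σ x) * spin (σ y)) ^ 2
          - (gibbs d n β h g fun σ => spin (σ x)) ^ 2
           * (gibbs d n β h g fun σ => spin (σ y)) ^ 2)
      ≤ 2 * cov d n β h g (fun σ => spin (σ x)) (fun σ => spin (σ y)) := by
  have c := cov_nonneg (h := h) hβ g x y
  unfold cov at *
  have a := gibbs_abs_le (β := β) (h := h) g (fun σ => spin (σ x) * spin (σ y)) 1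
    (fun σ => by rw [abs_mul, spin_abs, spin_abs]; simp)
  have b1 := gibbs_abs_le (β := β) (h := h) g (fun σ => spin (σ x)) 1 (fun σ => (spin_abs _).le)
  have b2 := gibbs_abs_le (β := β) (h := h) g (fun σ => spin (σ y)) 1 (fun σ => (spin_abs _).le)
  set A := gibbs d n β h g (fun σ => spin (σ x) * spin (σ y))
  set B := gibbs d n β h g (fun σ => spin (σ x))
  set D := gibbs d n β h g (fun σ => spin (σ y))
  have hBD : |B * D| ≤ 1 := by
    rw [abs_mul]; exact mul_le_one₀ b1 (abs_nonneg _) b2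
  have a' := (abs_le.1 a).2
  have b' := (abs_le.1 hBD).2
  nlinarith

lemma cov_sum (g : {x // x ∈ box d n} → ℝ) (k : Config d n → ℝ) :
    cov d n β h g (fun σ => ∑ x, spin (σ x)) k
      = ∑ x, cov d n β h g (fun σ => spin (σ x)) k := by
  unfold cov
  simp_rw [Finset.sum_mul]
  rw [gibbs_sum, gibbs_sum, Finset.sum_sub_distrib, Finset.sum_mul]

lemma sq_sum : ∫ g, (∑ y, g y) ^ 2 ∂(μdis d n) = ((box d n).card : ℝ) := by
  have h1 := variance_sum_pi (ι := {x // x ∈ box d n}) (μ := fun _ => gaussianReal 0 1)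
    (X := fun _ => id) (fun _ => memLp_id_gaussianReal' 2 (by simp))
  simp only [variance_id_gaussianReal] at h1
  have hm : ∫ g, (∑ y, g y) ∂(μdis d n) = 0 := by
    rw [integral_finsetSum _ fun y _ => (memLp_coord y).integrable (by norm_num)]
    refine Finset.sum_eq_zero fun y _ => ?_
    have mp := measurePreserving_eval (fun _ : {x // x ∈ box d n} => gaussianReal 0 1) y
    have := integral_map (μ := μdis d n) (f := fun x : ℝ => x) mp.aemeasurable
      (by fun_prop)
    refine this.symm.trans ?_
    unfold μdis
    rw [mp.map_eq]
    exact integral_id_gaussianReal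
  rw [variance_of_integral_eq_zero] at h1
  · simpa [μdis] using h1
  · fun_prop
  · simpa [μdis] using hm

lemma sum_cov_le (hh : 0 < h) :
    ∑ p : {x // x ∈ box d n} × {x // x ∈ box d n},
      ∫ g, cov d n β h g (fun σ => spin (σ p.1)) (fun σ => spin (σ p.2)) ∂(μdis d n)
    ≤ ((box d n).card : ℝ) * √((box d n).card : ℝ) / h := by
  set N : ℝ := ((box d n).card : ℝ) with hN
  have hM : ∀ σ : Config d n, |∑ x, spin (σ x)| ≤ N := fun σ => by
    refine (Finset.abs_sum_le_sum_abs _ _).trans ?_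
    simp [spin_abs, hN]
  rw [Fintype.sum_prod_type_right, le_div_iff₀ hh, mul_comm, Finset.mul_sum]
  have e : ∀ y : {x // x ∈ box d n}, h * ∑ x, ∫ g, cov d n β h g (fun σ => spin (σ x))
      (fun σ => spin (σ y)) ∂(μdis d n)
      = ∫ g, g y * gibbs d n β h g (fun σ => ∑ x, spin (σ x)) ∂(μdis d n) := by
    intro y
    rw [ibp y _ N hM, ← integral_finsetSum]
    · simp_rw [cov_sum]
    · intro x _
      exact integrable_bdd _ (2 * 1) (continuous_cov _ _)
        (fun g => cov_abs_le _ 1 (fun σ => (spin_abs _).le) y g)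
  simp_rw [e]
  have hi : ∀ y ∈ (Finset.univ : Finset {x // x ∈ box d n}),
    Integrable (fun g => g y * gibbs d n β h g (fun σ => ∑ x, spin (σ x))) (μdis d n) :=
    fun y _ => integrable_coord_mul y _ N (continuous_gibbs _) (fun g => gibbs_abs_le g _ N hM)
  rw [← integral_finsetSum _ hi]
  have hN0 : 0 ≤ N := Nat.cast_nonneg _
  rcases hN0.eq_or_lt with h0 | hpos
  · have : IsEmpty {x // x ∈ box d n} := by
      rw [← Fintype.card_eq_zero_iff, Fintype.card_coe]
      rw [hN] at h0; exact_mod_cast h0.symm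
    simp [← h0]
  have hs : 0 < √N := Real.sqrt_pos.2 hpos
  have hss : √N * √N = N := Real.mul_self_sqrt hN0
  have hL : MemLp (fun g : {x // x ∈ box d n} → ℝ => ∑ y, g y) 2 (μdis d n) :=
    memLp_finsetSum _ fun y _ => memLp_coord y
  have hbound : ∀ g : {x // x ∈ box d n} → ℝ,
      ∑ y, g y * gibbs d n β h g (fun σ => ∑ x, spin (σ x))
      ≤ √N / 2 * (∑ y, g y) ^ 2 + √N * N / 2 := by
    intro g
    rw [← Finset.sum_mul]
    have a := gibbs_abs_le (β := β) (h := h) g (fun σ => ∑ x, spin (σ x)) N hM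
    set S := ∑ y, g y
    set M := gibbs d n β h g (fun σ => ∑ x, spin (σ x))
    have h1 : S * M ≤ |S| * N := by
      refine (le_abs_self _).trans ?_
      rw [abs_mul]; exact mul_le_mul_of_nonneg_left a (abs_nonneg _)
    have h2 : |S| * N ≤ √N / 2 * S ^ 2 + √N * N / 2 := by
      have := mul_nonneg hs.le (sq_nonneg (|S| - √N))
      have h3 : |S| ^ 2 = S ^ 2 := sq_abs S
      rw [← h3]
      have h4 : √N * (|S| - √N) ^ 2 = √N * |S|^2 - 2 * |S| * (√N * √N) + √N * (√N * √N) := by ring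
      rw [h4, hss] at this
      linarith
    exact h1.trans h2
  have hi2 : Integrable (fun g : {x // x ∈ box d n} → ℝ => √N / 2 * (∑ y, g y) ^ 2) (μdis d n) :=
    hL.integrable_sq.const_mul _
  refine (integral_mono (integrable_finsetSum _ hi) (hi2.add (integrable_const (√N * N / 2)))
    hbound).trans ?_
  have : ∫ g : {x // x ∈ box d n} → ℝ, (√N / 2 * (∑ y, g y) ^ 2 + √N * N / 2) ∂(μdis d n) = √N / 2 * N + √N * N / 2 := by
    rw [integral_add hi2 (integrable_const _), integral_const_mul, sq_sum]
    simp [hN]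
  refine this.le.trans ?_
  linarith

end RFIM

theorem overlap_gibbs_fluctuation (d n : ℕ) (β h : ℝ) (hβ : 0 < β) (hh : 0 < h) :
    ∫ g, (gibbs2 d n β h g (fun σ1 σ2 => (overlap d n σ1 σ2) ^ 2)
        - (gibbs2 d n β h g (overlap d n)) ^ 2) ∂(μdis d n)
      ≤ 2 * Real.sqrt (2 + h ^ 2) / (h * Real.sqrt ((box d n).card : ℝ)) := by
  have hsum := RFIM.sum_cov_le (d := d) (n := n) (β := β) hh
  simp_rw [RFIM.pointwise hβ]
  rw [integral_const_mul]
  set N : ℝ := ((box d n).card : ℝ) with hN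
  have hN0 : 0 ≤ N := Nat.cast_nonneg _
  have ic : ∀ p ∈ (Finset.univ : Finset ({x // x ∈ box d n} × {x // x ∈ box d n})),
      Integrable (fun g => RFIM.cov d n β h g (fun σ => spin (σ p.1)) (fun σ => spin (σ p.2)))
        (μdis d n) := fun p _ =>
    RFIM.integrable_bdd _ (2 * 1) (RFIM.continuous_cov _ _)
      (fun g => RFIM.cov_abs_le _ 1 (fun σ => (RFIM.spin_abs _).le) p.2 g)
  have h1 : ∫ g, ∑ p : {x // x ∈ box d n} × {x // x ∈ box d n},
        ((gibbs d n β h g fun σ => spin (σ p.1) * spin (σ p.2)) ^ 2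
          - (gibbs d n β h g fun σ => spin (σ p.1)) ^ 2
           * (gibbs d n β h g fun σ => spin (σ p.2)) ^ 2) ∂(μdis d n)
      ≤ 2 * (N * √N / h) := by
    refine le_trans ?_ (mul_le_mul_of_nonneg_left hsum (by norm_num))
    rw [← integral_finsetSum _ ic, ← integral_const_mul]
    refine integral_mono ?_ ((integrable_finsetSum _ ic).const_mul 2) fun g => ?_
    · refine integrable_finsetSum _ fun p _ => ?_
      refine RFIM.integrable_bdd _ 1 ?_ fun g => ?_
      · exact ((RFIM.continuous_gibbs _).pow 2).sub
          (((RFIM.continuous_gibbs _).pow 2).mul ((RFIM.continuous_gibbs _).pow 2))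
      · have a := (sq_le_one_iff_abs_le_one _).2 (RFIM.gibbs_abs_le (β := β) (h := h) g
          (fun σ => spin (σ p.1) * spin (σ p.2)) 1
          (fun σ => by rw [abs_mul, RFIM.spin_abs, RFIM.spin_abs]; simp))
        have b := (sq_le_one_iff_abs_le_one _).2 (RFIM.gibbs_abs_le (β := β) (h := h) g
          (fun σ => spin (σ p.1)) 1 (fun σ => (RFIM.spin_abs _).le))
        have c := (sq_le_one_iff_abs_le_one _).2 (RFIM.gibbs_abs_le (β := β) (h := h) g
          (fun σ => spin (σ p.2)) 1 (fun σ => (RFIM.spin_abs _).le))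
        have hbc := mul_le_one₀ b (sq_nonneg _) c
        have hbc0 := mul_nonneg (sq_nonneg (gibbs d n β h g (fun σ => spin (σ p.1))))
          (sq_nonneg (gibbs d n β h g (fun σ => spin (σ p.2))))
        rw [abs_le]
        constructor
        · linarith [sq_nonneg (gibbs d n β h g (fun σ => spin (σ p.1) * spin (σ p.2)))]
        · linarith
    · simp only [Finset.mul_sum]
      exact Finset.sum_le_sum fun p _ => RFIM.pointwise_le hβ g p.1 p.2
  refine (mul_le_mul_of_nonneg_left h1 (sq_nonneg _)).trans ?_
  rcases hN0.eq_or_lt with h0 | hpos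
  · simp [← h0]
  have hs : 0 < √N := Real.sqrt_pos.2 hpos
  have hss : √N * √N = N := Real.mul_self_sqrt hN0
  have h2 : N⁻¹ ^ 2 * (2 * (N * √N / h)) = 2 * 1 / (h * √N) := by
    rw [← hss]
    have : √(√N * √N) = √N := by rw [hss]
    rw [this]
    field_simp
  rw [h2]
  have h3 : 1 ≤ √(2 + h ^ 2) := by
    rw [Real.one_le_sqrt]; nlinarith
  gcongr
end
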